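/- Let n ≥ 3 and let S, T ⊆ M_{n,n}* be disjoint subsets with S nonempty such that M_{n,n} is ST-distributive. Then T cannot contain four elements consisting of two elements from the level {a₁,…,aₙ} and two elements from the level {b₁,…,bₙ}; that is, there are no indices i ≠ j and k ≠ l with {aᵢ, aⱼ, b_k, b_l} ⊆ T. -/

import Mathlib

/-- The underlying set of the lattice `M_{n,n}`: a bottom element `0`, a top
element `1`, and two levels `a₁, …, aₙ` and `b₁, …, bₙ`.  Here `a i` (for
`i : Fin n`) stands for `a_{i+1}` and `b j` for `b_{j+1}`, so the link elements
are `aₙ = a ⟨n-1, _⟩` and `b₁ = b ⟨0, _⟩`. -/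
inductive Mnn (n : ℕ) : Type where
  | bot : Mnn n
  | top : Mnn n
  | a : Fin n → Mnn n
  | b : Fin n → Mnn n
deriving DecidableEq

namespace Mnn

/-- The order of `M_{n,n}`: `0` is least, `1` is greatest, `aᵢ ≤ b₁` for every
`i`, `aₙ ≤ bⱼ` for every `j`, and there are no other comparabilities besides
those forced by reflexivity. -/
def le {n : ℕ} : Mnn n → Mnn n → Prop
  | .bot, _ => True
  | .top, .top => True
  | .top, .bot => False
  | .top, .a _ => False
  | .top, .b _ => False
  | .a _, .top => True
  | .a _, .bot => False
  | .a i, .a j => i = j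
  | .a i, .b j => (j : ℕ) = 0 ∨ (i : ℕ) = n - 1
  | .b _, .top => True
  | .b _, .bot => False
  | .b _, .a _ => False
  | .b i, .b j => i = j

/-- The join operation of `M_{n,n}`. -/
def sup {n : ℕ} : Mnn n → Mnn n → Mnn n
  | .bot, x => x
  | .top, _ => .top
  | .a i, .bot => .a i
  | .a _, .top => .top
  | .a i, .a j => if i = j then .a i else .b ⟨0, Nat.lt_of_le_of_lt (Nat.zero_le _) i.isLt⟩
  | .a i, .b j => if (j : ℕ) = 0 ∨ (i : ℕ) = n - 1 then .b j else .top
  | .b i, .bot => .b i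
  | .b _, .top => .top
  | .b i, .a j => if (i : ℕ) = 0 ∨ (j : ℕ) = n - 1 then .b i else .top
  | .b i, .b j => if i = j then .b i else .top

/-- The meet operation of `M_{n,n}`. -/
def inf {n : ℕ} : Mnn n → Mnn n → Mnn n
  | .bot, _ => .bot
  | .top, x => x
  | .a _, .bot => .bot
  | .a i, .top => .a i
  | .a i, .a j => if i = j then .a i else .bot
  | .a i, .b j => if (j : ℕ) = 0 ∨ (i : ℕ) = n - 1 then .a i else .bot
  | .b _, .bot => .bot
  | .b i, .top => .b i
  | .b i, .a j => if (i : ℕ) = 0 ∨ (j : ℕ) = n - 1 then .a j else .bot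
  | .b i, .b j => if i = j then .b i
      else .a ⟨n - 1, Nat.sub_lt (Nat.lt_of_le_of_lt (Nat.zero_le _) i.isLt) Nat.one_pos⟩

theorem le_refl' {n : ℕ} (x : Mnn n) : le x x := by cases x <;> simp [le]

theorem le_trans' {n : ℕ} (x y z : Mnn n) (hxy : le x y) (hyz : le y z) : le x z := by
  cases x <;> cases y <;> cases z <;> simp_all [le] <;> omega

theorem le_antisymm' {n : ℕ} (x y : Mnn n) (hxy : le x y) (hyx : le y x) : x = y := by
  cases x <;> cases y <;> simp_all [le]

theorem le_sup_left' {n : ℕ} (x y : Mnn n) : le x (sup x y) := by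
  cases x <;> cases y <;> dsimp only [sup] <;> (try split_ifs) <;> simp_all [le]

theorem le_sup_right' {n : ℕ} (x y : Mnn n) : le y (sup x y) := by
  cases x <;> cases y <;> dsimp only [sup] <;> (try split_ifs) <;> simp_all [le]

theorem sup_le' {n : ℕ} (x y z : Mnn n) (hxz : le x z) (hyz : le y z) :
    le (sup x y) z := by
  cases x <;> cases y <;> cases z <;> dsimp only [sup] <;> (try split_ifs) <;>
    simp_all [le, Fin.ext_iff] <;> omega

theorem inf_le_left' {n : ℕ} (x y : Mnn n) : le (inf x y) x := by
  cases x <;> cases y <;> dsimp only [inf] <;> (try split_ifs) <;> simp_all [le]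

theorem inf_le_right' {n : ℕ} (x y : Mnn n) : le (inf x y) y := by
  cases x <;> cases y <;> dsimp only [inf] <;> (try split_ifs) <;> simp_all [le]

theorem le_inf' {n : ℕ} (x y z : Mnn n) (hxy : le x y) (hxz : le x z) :
    le x (inf y z) := by
  cases x <;> cases y <;> cases z <;> dsimp only [inf] <;> (try split_ifs) <;>
    simp_all [le, Fin.ext_iff] <;> omega

/-- `M_{n,n}` is a lattice. -/
instance instLattice (n : ℕ) : Lattice (Mnn n) where
  le := le
  sup := sup
  inf := inf
  le_refl := le_refl'
  le_trans := le_trans'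
  le_antisymm := le_antisymm'
  le_sup_left := le_sup_left'
  le_sup_right := le_sup_right'
  sup_le := sup_le'
  inf_le_left := inf_le_left'
  inf_le_right := inf_le_right'
  le_inf := le_inf'

/-- `M_{n,n}* = M_{n,n} ∖ {0, 1}`, the set of non-identity elements. -/
def star (n : ℕ) : Set (Mnn n) := {x | x ≠ .bot ∧ x ≠ .top}

/-- The level `{a₁, …, aₙ}` of `M_{n,n}`. -/
def aLevel (n : ℕ) : Set (Mnn n) := Set.range Mnn.a

/-- The level `{b₁, …, bₙ}` of `M_{n,n}`. -/
def bLevel (n : ℕ) : Set (Mnn n) := Set.range Mnn.b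

/-- The link element `aₙ` of the level `{a₁, …, aₙ}`. -/
def aLink (n : ℕ) (h : 0 < n) : Mnn n := .a ⟨n - 1, Nat.sub_lt h Nat.one_pos⟩

/-- The link element `b₁` of the level `{b₁, …, bₙ}`. -/
def bLink (n : ℕ) (h : 0 < n) : Mnn n := .b ⟨0, h⟩

end Mnn

/-- `L` is `ST`-meet distributive. -/
def IsSTMeetDistrib {α : Type*} [Lattice α] (S T : Set α) : Prop :=
  ∀ s ∈ S, ∀ t₁ ∈ T, ∀ t₂ ∈ T, s ⊓ (t₁ ⊔ t₂) = (s ⊓ t₁) ⊔ (s ⊓ t₂)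

/-- `L` is `ST`-join distributive. -/
def IsSTJoinDistrib {α : Type*} [Lattice α] (S T : Set α) : Prop :=
  ∀ s ∈ S, ∀ t₁ ∈ T, ∀ t₂ ∈ T, s ⊔ (t₁ ⊓ t₂) = (s ⊔ t₁) ⊓ (s ⊔ t₂)

/-- `L` is `ST`-distributive. -/
def IsSTDistrib {α : Type*} [Lattice α] (S T : Set α) : Prop :=
  IsSTMeetDistrib S T ∧ IsSTJoinDistrib S T

/-- `(S, T)` is a maximal `ST`-pair of `M_{n,n}` (subject to the conditions of
the search problem: `S, T ⊆ M_{n,n}*`, `S ∩ T = ∅`, `S ≠ ∅`, `T ≠ ∅`). -/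
def MaximalSTPair (n : ℕ) (S T : Set (Mnn n)) : Prop :=
  S ⊆ Mnn.star n ∧ T ⊆ Mnn.star n ∧ S ∩ T = ∅ ∧ S.Nonempty ∧ T.Nonempty ∧
  IsSTDistrib S T ∧
  (¬ ∃ S' : Set (Mnn n), S ⊂ S' ∧ S' ⊆ Mnn.star n ∧ S' ∩ T = ∅ ∧ IsSTDistrib S' T) ∧
  (¬ ∃ T' : Set (Mnn n), T ⊂ T' ∧ T' ⊆ Mnn.star n ∧ S ∩ T' = ∅ ∧ IsSTDistrib S T')

/-!
Three distinct elements of one level generate a copy of the diamond `M₃`, with pairwise meets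
`v` and pairwise joins `u`. If `s ∈ S` and `t₁, t₂ ∈ T` are three such elements, then
`s ⊓ (t₁ ⊔ t₂) = s` while `(s ⊓ t₁) ⊔ (s ⊓ t₂) = v`, against meet distributivity; the dual
computation contradicts join distributivity. Hence `T` has at most one element on every level
that `S` meets, and `S ⊆ M_{n,n}*` being nonempty meets one of the two levels.
-/

section Diamond

variable {α : Type*} [Lattice α] {A S T : Set α} {v u : α}

/-- `A` is the middle layer of a diamond `M_κ`, `κ = |A|`, inside a lattice: `v` is the meet and
`u` the join of any two distinct elements of `A`. The levels of `M_{n,n}` are the examples. The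
strict bounds are separate fields because the equations say nothing when `A` has at most one
element. -/
structure IsDiamond (A : Set α) (v u : α) : Prop where
  lower_lt : ∀ x ∈ A, v < x
  lt_upper : ∀ x ∈ A, x < u
  inf_eq : A.Pairwise fun x y ↦ x ⊓ y = v
  sup_eq : A.Pairwise fun x y ↦ x ⊔ y = u

namespace IsDiamond

theorem dual (hA : IsDiamond A v u) :
    IsDiamond (OrderDual.ofDual ⁻¹' A) (OrderDual.toDual u) (OrderDual.toDual v) where
  lower_lt := hA.lt_upper
  lt_upper := hA.lower_lt
  inf_eq := hA.sup_eq
  sup_eq := hA.inf_eq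

theorem subsingleton_inter_of_isSTMeetDistrib (hA : IsDiamond A v u) (hdisj : Disjoint S T)
    (hSA : (S ∩ A).Nonempty) (h : IsSTMeetDistrib S T) : (T ∩ A).Subsingleton := by
  obtain ⟨s, hsS, hsA⟩ := hSA
  rintro t₁ ⟨ht₁T, ht₁A⟩ t₂ ⟨ht₂T, ht₂A⟩
  by_contra hne
  have hsup : t₁ ⊔ t₂ = u := hA.sup_eq ht₁A ht₂A hne
  have hinf₁ : s ⊓ t₁ = v := hA.inf_eq hsA ht₁A (hdisj.ne_of_mem hsS ht₁T)
  have hinf₂ : s ⊓ t₂ = v := hA.inf_eq hsA ht₂A (hdisj.ne_of_mem hsS ht₂T)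
  have hsv : s = v := calc
    s = s ⊓ u := (inf_eq_left.mpr (hA.lt_upper s hsA).le).symm
    _ = s ⊓ (t₁ ⊔ t₂) := by rw [hsup]
    _ = (s ⊓ t₁) ⊔ (s ⊓ t₂) := h s hsS t₁ ht₁T t₂ ht₂T
    _ = v := by rw [hinf₁, hinf₂, sup_idem]
  exact (hA.lower_lt s hsA).ne' hsv

theorem subsingleton_inter_of_isSTJoinDistrib (hA : IsDiamond A v u) (hdisj : Disjoint S T)
    (hSA : (S ∩ A).Nonempty) (h : IsSTJoinDistrib S T) : (T ∩ A).Subsingleton :=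
  hA.dual.subsingleton_inter_of_isSTMeetDistrib
    (S := OrderDual.ofDual ⁻¹' S) (T := OrderDual.ofDual ⁻¹' T) hdisj hSA h

theorem subsingleton_inter (hA : IsDiamond A v u) (hdisj : Disjoint S T)
    (hSA : (S ∩ A).Nonempty) (h : IsSTMeetDistrib S T ∨ IsSTJoinDistrib S T) :
    (T ∩ A).Subsingleton :=
  h.elim (hA.subsingleton_inter_of_isSTMeetDistrib hdisj hSA)
    (hA.subsingleton_inter_of_isSTJoinDistrib hdisj hSA)

end IsDiamond

end Diamond

namespace Mnn

theorem a_injective {n : ℕ} : Function.Injective (a : Fin n → Mnn n) := fun _ _ ↦ a.inj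

theorem b_injective {n : ℕ} : Function.Injective (b : Fin n → Mnn n) := fun _ _ ↦ b.inj

theorem star_eq_aLevel_union_bLevel (n : ℕ) : star n = aLevel n ∪ bLevel n := by
  ext x
  cases x <;> simp [star, aLevel, bLevel]

theorem isDiamond_aLevel {n : ℕ} (hn : 0 < n) : IsDiamond (aLevel n) bot (bLink n hn) where
  lower_lt := by
    rintro _ ⟨i, rfl⟩
    exact lt_of_le_of_ne trivial nofun
  lt_upper := by
    rintro _ ⟨i, rfl⟩
    exact lt_of_le_of_ne (Or.inl rfl) nofun
  inf_eq := by
    rintro _ ⟨i, rfl⟩ _ ⟨j, rfl⟩ hij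
    exact if_neg (a_injective.ne_iff.mp hij)
  sup_eq := by
    rintro _ ⟨i, rfl⟩ _ ⟨j, rfl⟩ hij
    exact if_neg (a_injective.ne_iff.mp hij)

theorem isDiamond_bLevel {n : ℕ} (hn : 0 < n) : IsDiamond (bLevel n) (aLink n hn) top where
  lower_lt := by
    rintro _ ⟨i, rfl⟩
    exact lt_of_le_of_ne (Or.inr rfl) nofun
  lt_upper := by
    rintro _ ⟨i, rfl⟩
    exact lt_of_le_of_ne trivial nofun
  inf_eq := by
    rintro _ ⟨i, rfl⟩ _ ⟨j, rfl⟩ hij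
    exact if_neg (b_injective.ne_iff.mp hij)
  sup_eq := by
    rintro _ ⟨i, rfl⟩ _ ⟨j, rfl⟩ hij
    exact if_neg (b_injective.ne_iff.mp hij)

end Mnn

theorem restriction_on_T_general {n : ℕ} {S T : Set (Mnn n)} (hdisj : Disjoint S T)
    (hS : (S ∩ Mnn.star n).Nonempty) (h : IsSTMeetDistrib S T ∨ IsSTJoinDistrib S T) :
    ¬ ∃ i j k l : Fin n, i ≠ j ∧ k ≠ l ∧
      Mnn.a i ∈ T ∧ Mnn.a j ∈ T ∧ Mnn.b k ∈ T ∧ Mnn.b l ∈ T := by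
  rintro ⟨i, j, k, l, hij, hkl, hi, hj, hk, hl⟩
  rw [Mnn.star_eq_aLevel_union_bLevel, Set.inter_union_distrib_left, Set.union_nonempty] at hS
  rcases hS with hSa | hSb
  · have hTa := (Mnn.isDiamond_aLevel i.pos).subsingleton_inter hdisj hSa h
    exact hij (Mnn.a_injective (hTa ⟨hi, i, rfl⟩ ⟨hj, j, rfl⟩))
  · have hTb := (Mnn.isDiamond_bLevel i.pos).subsingleton_inter hdisj hSb h
    exact hkl (Mnn.b_injective (hTb ⟨hk, k, rfl⟩ ⟨hl, l, rfl⟩))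

/-- Restriction on `T`: if `S, T ⊆ M_{n,n}*` are disjoint, `S` is nonempty and
`M_{n,n}` is `ST`-distributive, then `T` cannot contain two elements from each
of the two levels. -/
theorem restriction_on_T (n : ℕ) (hn : 3 ≤ n) (S T : Set (Mnn n))
    (hS : S ⊆ Mnn.star n) (hT : T ⊆ Mnn.star n) (hdisj : Disjoint S T)
    (hSne : S.Nonempty) (h : IsSTDistrib S T) :
    ¬ ∃ i j k l : Fin n, i ≠ j ∧ k ≠ l ∧
      Mnn.a i ∈ T ∧ Mnn.a j ∈ T ∧ Mnn.b k ∈ T ∧ Mnn.b l ∈ T :=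
  restriction_on_T_general hdisj (hSne.mono fun _ hs ↦ ⟨hs, hS hs⟩) (.inl h.1)
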